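/- Let ψ: ℕ → (0,∞) with ψ(n) → ∞ and ψ(n)/n → 0. Then the set E_sup(ψ) = { x ∈ (0,1] : limsup_{n→∞} (log d_n(x))/ψ(n) = 1 } has Hausdorff dimension 1. -/

import Mathlib

open Filter Topology Real Set

/-- The first Lüroth digit: `d₁(x) = ⌊1/x⌋ + 1`. -/
noncomputable def lurothD1 (x : ℝ) : ℕ := ⌊1 / x⌋₊ + 1

/-- The Lüroth map `T(x) = d₁(x)(d₁(x)-1)(x - 1/d₁(x))`. -/
noncomputable def lurothT (x : ℝ) : ℝ :=
  (lurothD1 x : ℝ) * ((lurothD1 x : ℝ) - 1) * (x - 1 / (lurothD1 x : ℝ))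

/-- The `n`-th Lüroth digit `dₙ(x) = d₁(T^{n-1}(x))`. -/
noncomputable def lurothDigit (n : ℕ) (x : ℝ) : ℕ := lurothD1 (lurothT^[n - 1] x)

open scoped NNReal ENNReal

/-- The contraction ratio `1 / (d (d - 1))` of the inverse branch of the Lüroth map at digit `d`. -/
noncomputable def lurothRatio (d : ℕ) : ℝ := 1 / ((d : ℝ) * ((d : ℝ) - 1))

lemma lurothRatio_pos {d : ℕ} (hd : 2 ≤ d) : 0 < lurothRatio d := by
  have h : (2 : ℝ) ≤ d := by exact_mod_cast hd
  unfold lurothRatio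
  have : 0 < (d : ℝ) - 1 := by linarith
  positivity

lemma lurothRatio_le_half {d : ℕ} (hd : 2 ≤ d) : lurothRatio d ≤ 1 / 2 := by
  have h : (2 : ℝ) ≤ d := by exact_mod_cast hd
  unfold lurothRatio
  exact one_div_le_one_div_of_le (by norm_num) (by nlinarith)

lemma one_div_sq_le_lurothRatio {d : ℕ} (hd : 2 ≤ d) : 1 / (d : ℝ) ^ 2 ≤ lurothRatio d := by
  have h : (2 : ℝ) ≤ d := by exact_mod_cast hd
  unfold lurothRatio
  exact one_div_le_one_div_of_le (by nlinarith) (by nlinarith)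

lemma one_div_add_lurothRatio {d : ℕ} (hd : 2 ≤ d) :
    1 / (d : ℝ) + lurothRatio d = 1 / ((d : ℝ) - 1) := by
  have h : (2 : ℝ) ≤ d := by exact_mod_cast hd
  have h1 : (d : ℝ) - 1 ≠ 0 := by linarith
  unfold lurothRatio
  field_simp
  ring

lemma lurothD1_spec {x : ℝ} (hx : x ∈ Ioc (0 : ℝ) 1) :
    2 ≤ lurothD1 x ∧ 1 / (lurothD1 x : ℝ) < x ∧ x ≤ 1 / ((lurothD1 x : ℝ) - 1) := by
  obtain ⟨h0, h1⟩ := hx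
  have hi : 1 ≤ 1 / x := by rw [le_div_iff₀ h0]; linarith
  have hf : 1 ≤ ⌊1 / x⌋₊ := Nat.le_floor (by exact_mod_cast hi)
  have hf' : (1 : ℝ) ≤ ⌊1 / x⌋₊ := by exact_mod_cast hf
  refine ⟨by unfold lurothD1; omega, ?_, ?_⟩
  · have := Nat.lt_floor_add_one (1 / x)
    unfold lurothD1
    push_cast
    rw [div_lt_comm₀ (by positivity) h0]
    exact this
  · have := Nat.floor_le (zero_le_one.trans hi)
    unfold lurothD1
    push_cast
    rw [add_sub_cancel_right, le_div_comm₀ h0 (by positivity)]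
    exact this

lemma lurothD1_eq {x : ℝ} {d : ℕ} (hd : 2 ≤ d) (h1 : 1 / (d : ℝ) < x)
    (h2 : x ≤ 1 / ((d : ℝ) - 1)) : lurothD1 x = d := by
  have h : (2 : ℝ) ≤ d := by exact_mod_cast hd
  have h0 : 0 < x := lt_trans (by positivity) h1
  obtain ⟨k, rfl⟩ : ∃ k, d = k + 1 := ⟨d - 1, by omega⟩
  push_cast at h h1 h2
  unfold lurothD1
  rw [Nat.add_right_cancel_iff, Nat.floor_eq_iff (by positivity)]
  rw [add_sub_cancel_right] at h2
  have hk : (0 : ℝ) < k := by linarith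
  exact ⟨by rwa [le_div_comm₀ hk h0], by rwa [div_lt_comm₀ h0 (by positivity)]⟩

lemma lurothD1_le {x : ℝ} {M : ℕ} (hM : 0 < M) (h : 1 / (M : ℝ) < x) : lurothD1 x ≤ M := by
  have hM' : (0 : ℝ) < M := by exact_mod_cast hM
  have h0 : 0 < x := lt_trans (by positivity) h
  unfold lurothD1
  rw [Nat.add_one_le_iff, Nat.floor_lt (by positivity), div_lt_comm₀ h0 hM']
  exact h

lemma eq_one_div_add_lurothRatio_mul {x : ℝ} (hx : x ∈ Ioc (0 : ℝ) 1) :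
    x = 1 / (lurothD1 x : ℝ) + lurothRatio (lurothD1 x) * lurothT x := by
  have h : (2 : ℝ) ≤ lurothD1 x := by exact_mod_cast (lurothD1_spec hx).1
  have h1 : (lurothD1 x : ℝ) - 1 ≠ 0 := by linarith
  unfold lurothRatio lurothT
  field_simp
  ring

lemma lurothT_mem {x : ℝ} (hx : x ∈ Ioc (0 : ℝ) 1) : lurothT x ∈ Ioc (0 : ℝ) 1 := by
  obtain ⟨h2, hl, hu⟩ := lurothD1_spec hx
  have hr := lurothRatio_pos h2
  have he := eq_one_div_add_lurothRatio_mul hx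
  rw [← one_div_add_lurothRatio h2] at hu
  constructor
  · by_contra! hc
    nlinarith
  · by_contra! hc
    nlinarith

lemma lurothD1_branch {d : ℕ} (hd : 2 ≤ d) {y : ℝ} (hy : y ∈ Ioc (0 : ℝ) 1) :
    lurothD1 (1 / (d : ℝ) + lurothRatio d * y) = d := by
  have hr := lurothRatio_pos hd
  apply lurothD1_eq hd
  · nlinarith [hy.1]
  · rw [← one_div_add_lurothRatio hd]
    nlinarith [hy.2]

lemma lurothT_branch {d : ℕ} (hd : 2 ≤ d) {y : ℝ} (hy : y ∈ Ioc (0 : ℝ) 1) :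
    lurothT (1 / (d : ℝ) + lurothRatio d * y) = y := by
  have h : (2 : ℝ) ≤ d := by exact_mod_cast hd
  have h1 : (d : ℝ) - 1 ≠ 0 := by linarith
  unfold lurothT
  rw [lurothD1_branch hd hy]
  unfold lurothRatio
  field_simp
  ring

/-- The Lüroth series with digit sequence `D`. -/
noncomputable def lurothSeries (D : ℕ → ℕ) : ℝ :=
  ∑' k, 1 / (D k : ℝ) * ∏ i ∈ Finset.range k, lurothRatio (D i)

section Series

variable {D : ℕ → ℕ}

lemma prod_lurothRatio_pos (hD : ∀ n, 2 ≤ D n) (k : ℕ) :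
    0 < ∏ i ∈ Finset.range k, lurothRatio (D i) :=
  Finset.prod_pos fun i _ => lurothRatio_pos (hD i)

lemma lurothSeries_term_pos (hD : ∀ n, 2 ≤ D n) (k : ℕ) :
    0 < 1 / (D k : ℝ) * ∏ i ∈ Finset.range k, lurothRatio (D i) := by
  have : (2 : ℝ) ≤ D k := by exact_mod_cast hD k
  have := prod_lurothRatio_pos hD k
  positivity

lemma lurothSeries_partial_sum_le (hD : ∀ n, 2 ≤ D n) (N : ℕ) :
    ∑ k ∈ Finset.range N, 1 / (D k : ℝ) * ∏ i ∈ Finset.range k, lurothRatio (D i) ≤ 1 := by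
  suffices h : ∑ k ∈ Finset.range N, 1 / (D k : ℝ) * ∏ i ∈ Finset.range k, lurothRatio (D i)
      + ∏ i ∈ Finset.range N, lurothRatio (D i) ≤ 1 by
    linarith [prod_lurothRatio_pos hD N]
  induction N with
  | zero => simp
  | succ N ih =>
    rw [Finset.sum_range_succ, Finset.prod_range_succ]
    have hP := prod_lurothRatio_pos hD N
    have h2 : (2 : ℝ) ≤ D N := by exact_mod_cast hD N
    have h1 : 1 / (D N : ℝ) + lurothRatio (D N) ≤ 1 := by
      rw [one_div_add_lurothRatio (hD N), div_le_one (by linarith)]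
      linarith
    nlinarith

lemma lurothSeries_summable (hD : ∀ n, 2 ≤ D n) :
    Summable fun k => 1 / (D k : ℝ) * ∏ i ∈ Finset.range k, lurothRatio (D i) :=
  summable_of_sum_range_le (fun k => (lurothSeries_term_pos hD k).le)
    (lurothSeries_partial_sum_le hD)

lemma lurothSeries_mem (hD : ∀ n, 2 ≤ D n) : lurothSeries D ∈ Ioc (0 : ℝ) 1 :=
  ⟨(lurothSeries_summable hD).tsum_pos (fun k => (lurothSeries_term_pos hD k).le) 0
      (lurothSeries_term_pos hD 0),
    Real.tsum_le_of_sum_range_le (fun k => (lurothSeries_term_pos hD k).le)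
      (lurothSeries_partial_sum_le hD)⟩

lemma lurothSeries_eq (hD : ∀ n, 2 ≤ D n) :
    lurothSeries D = 1 / (D 0 : ℝ) + lurothRatio (D 0) * lurothSeries (fun i => D (i + 1)) := by
  unfold lurothSeries
  rw [(lurothSeries_summable hD).tsum_eq_zero_add, ← tsum_mul_left]
  congr 1
  · simp
  · refine tsum_congr fun k => ?_
    rw [Finset.prod_range_succ']
    ring

lemma lurothSeries_shift_eq (hD : ∀ n, 2 ≤ D n) (n : ℕ) :
    lurothSeries (fun i => D (i + n)) =
      1 / (D n : ℝ) + lurothRatio (D n) * lurothSeries (fun i => D (i + (n + 1))) := by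
  rw [lurothSeries_eq fun i => hD (i + n)]
  simp only [zero_add, add_right_comm _ 1 n, add_assoc]

lemma lurothT_iterate_lurothSeries (hD : ∀ n, 2 ≤ D n) (n : ℕ) :
    lurothT^[n] (lurothSeries D) = lurothSeries (fun i => D (i + n)) := by
  induction n with
  | zero => simp
  | succ n ih =>
    rw [Function.iterate_succ_apply', ih, lurothSeries_shift_eq hD n,
      lurothT_branch (hD n) (lurothSeries_mem fun i => hD _)]

lemma lurothDigit_lurothSeries (hD : ∀ n, 2 ≤ D n) (n : ℕ) :
    lurothDigit (n + 1) (lurothSeries D) = D n := by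
  unfold lurothDigit
  rw [Nat.add_sub_cancel, lurothT_iterate_lurothSeries hD, lurothSeries_shift_eq hD,
    lurothD1_branch (hD n) (lurothSeries_mem fun i => hD _)]

end Series

lemma sub_eq_prod_mul_sub {u v w : ℕ → ℝ} {n : ℕ}
    (h : ∀ i < n, u i - v i = w i * (u (i + 1) - v (i + 1))) :
    u 0 - v 0 = (∏ i ∈ Finset.range n, w i) * (u n - v n) := by
  induction n with
  | zero => simp
  | succ n ih =>
    rw [ih fun i hi => h i (by omega), h n (by omega), Finset.prod_range_succ]
    ring

lemma lurothSeries_dist_ge_of_lt {D D' : ℕ → ℕ} (hD : ∀ n, 2 ≤ D n) (hD' : ∀ n, 2 ≤ D' n)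
    (h : D 0 < D' 0) :
    lurothRatio (D 0) / D 1 ≤ lurothSeries D - lurothSeries D' := by
  have e := lurothSeries_eq hD
  have e1 := lurothSeries_eq fun n => hD (n + 1)
  have e' := lurothSeries_eq hD'
  have hm := (lurothSeries_mem fun n => hD (n + 1 + 1)).1
  have hm' := (lurothSeries_mem fun n => hD' (n + 1)).2
  have hr := lurothRatio_pos (hD 0)
  have hr1 := lurothRatio_pos (hD 1)
  have hr' := lurothRatio_pos (hD' 0)
  have h1 : 1 / (D 1 : ℝ) ≤ lurothSeries fun n => D (n + 1) := by
    rw [e1, zero_add]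
    have := mul_pos hr1 hm
    linarith
  have h2 : lurothSeries D' ≤ 1 / (D 0 : ℝ) := by
    have hlt : (D 0 : ℝ) + 1 ≤ D' 0 := by exact_mod_cast h
    have h0 : (2 : ℝ) ≤ D 0 := by exact_mod_cast hD 0
    calc lurothSeries D' ≤ 1 / (D' 0 : ℝ) + lurothRatio (D' 0) := by rw [e']; nlinarith
      _ = 1 / ((D' 0 : ℝ) - 1) := one_div_add_lurothRatio (hD' 0)
      _ ≤ 1 / (D 0 : ℝ) := one_div_le_one_div_of_le (by linarith) (by linarith)
  rw [e, div_eq_mul_one_div]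
  nlinarith

/-- Separation of two Lüroth series whose digits first differ at position `n`. -/
lemma lurothSeries_dist_ge {D D' : ℕ → ℕ} (hD : ∀ n, 2 ≤ D n) (hD' : ∀ n, 2 ≤ D' n) {n : ℕ}
    (heq : ∀ i < n, D i = D' i) (hne : D n ≠ D' n) {M Q : ℝ} (hM : D n ≤ M) (hM' : D' n ≤ M)
    (hQ : D (n + 1) ≤ Q) (hQ' : D' (n + 1) ≤ Q) :
    (∏ i ∈ Finset.range n, lurothRatio (D i)) * (1 / (M ^ 2 * Q)) ≤
      dist (lurothSeries D) (lurothSeries D') := by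
  have key := sub_eq_prod_mul_sub (u := fun k => lurothSeries fun i => D (i + k))
    (v := fun k => lurothSeries fun i => D' (i + k)) (w := fun i => lurothRatio (D i)) (n := n)
    (fun i hi => by
      simp only [lurothSeries_shift_eq hD i, lurothSeries_shift_eq hD' i, heq i hi]
      ring)
  simp only [add_zero] at key
  have hP := prod_lurothRatio_pos hD n
  rw [Real.dist_eq, key, abs_mul, abs_of_pos hP]
  refine mul_le_mul_of_nonneg_left ?_ hP.le
  have bound : ∀ d e : ℕ, 2 ≤ d → 2 ≤ e → d ≤ M → e ≤ Q →
      1 / (M ^ 2 * Q) ≤ lurothRatio d / e := by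
    intro d e hd he hdM heQ
    have hd2 : (2 : ℝ) ≤ d := by exact_mod_cast hd
    have he2 : (2 : ℝ) ≤ e := by exact_mod_cast he
    calc 1 / (M ^ 2 * Q) ≤ 1 / ((d : ℝ) ^ 2 * e) :=
          one_div_le_one_div_of_le (by positivity) (by gcongr)
      _ = 1 / (d : ℝ) ^ 2 / e := by rw [div_div]
      _ ≤ lurothRatio d / e := by gcongr; exact one_div_sq_le_lurothRatio hd
  rcases lt_or_gt_of_ne hne with h | h
  · have := lurothSeries_dist_ge_of_lt (D := fun i => D (i + n)) (D' := fun i => D' (i + n))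
      (fun i => hD _) (fun i => hD' _) (by simpa using h)
    simp only [zero_add, add_comm 1 n] at this
    exact (bound _ _ (hD n) (hD (n + 1)) hM hQ).trans (this.trans (le_abs_self _))
  · have := lurothSeries_dist_ge_of_lt (D := fun i => D' (i + n)) (D' := fun i => D (i + n))
      (fun i => hD' _) (fun i => hD _) (by simpa using h)
    simp only [zero_add, add_comm 1 n] at this
    rw [abs_sub_comm]
    exact (bound _ _ (hD' n) (hD' (n + 1)) hM' hQ').trans (this.trans (le_abs_self _))

lemma dimH_le_dimH_image_div {X Y : Type*} [MetricSpace X] [MetricSpace Y] {f : X → Y}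
    {A : Set X} {C s : ℝ≥0} (hs : 0 < s)
    (h : ∀ x ∈ A, ∀ y ∈ A, dist x y ≤ C * dist (f x) (f y) ^ (s : ℝ)) :
    dimH A ≤ dimH (f '' A) / s := by
  rcases A.eq_empty_or_nonempty with rfl | ⟨a, ha⟩
  · simp
  have : Nonempty X := ⟨a⟩
  have hinj : A.InjOn f := by
    intro x hx y hy hxy
    have := h x hx y hy
    rw [hxy, dist_self, Real.zero_rpow (by positivity), mul_zero] at this
    exact dist_le_zero.1 this
  have hinv := hinj.leftInvOn_invFunOn
  have hH : HolderOnWith C s (Function.invFunOn f A) (f '' A) := by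
    rintro _ ⟨x, hx, rfl⟩ _ ⟨y, hy, rfl⟩
    rw [hinv hx, hinv hy, edist_dist, edist_dist,
      ENNReal.ofReal_rpow_of_nonneg dist_nonneg s.coe_nonneg, ← ENNReal.ofReal_coe_nnreal,
      ← ENNReal.ofReal_mul C.coe_nonneg]
    exact ENNReal.ofReal_le_ofReal (h x hx y hy)
  have := hH.dimH_image_le hs
  rwa [hinv.image_image] at this

lemma exists_greedy_selection {κ : ℕ → ℝ} {l : ℝ} (hl0 : 0 < l) (hl1 : l < 1)
    (hκ : ∀ n, 1 ≤ κ n) (hlim : Tendsto (fun n => κ n * l ^ n) atTop (𝓝 0)) :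
    ∃ (S : Set ℕ) (B : ℕ → ℝ), (∃ᶠ n in atTop, n ∈ S) ∧ B 0 = 1 ∧ (∀ n, 1 ≤ B n) ∧
      (∀ n ∈ S, B (n + 1) = B n * κ n) ∧ (∀ n ∉ S, B (n + 1) = B n) ∧
      ∀ n, B n * l ^ n ≤ 1 := by
  classical
  let B : ℕ → ℝ := fun n =>
    Nat.rec 1 (fun n b => if b * κ n * l ^ n ≤ 1 then b * κ n else b) n
  have hB0 : B 0 = 1 := rfl
  have hBs : ∀ n, B (n + 1) = if B n * κ n * l ^ n ≤ 1 then B n * κ n else B n := fun n => rfl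
  have hB1 : ∀ n, 1 ≤ B n := by
    intro n
    induction n with
    | zero => exact hB0.ge
    | succ n ih =>
      rw [hBs]
      split_ifs
      · exact one_le_mul_of_one_le_of_one_le ih (hκ n)
      · exact ih
  refine ⟨{n | B n * κ n * l ^ n ≤ 1}, B, ?_, hB0, hB1, fun n hn => ?_, fun n hn => ?_, fun n => ?_⟩
  · intro hfin
    obtain ⟨N, hN⟩ := eventually_atTop.1 hfin
    have hconst : ∀ n, N ≤ n → B n = B N := by
      intro n hn
      induction n, hn using Nat.le_induction with
      | base => rfl
      | succ n hn ih => exact ((hBs n).trans (if_neg (hN n hn))).trans ih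
    have hlim' := hlim.const_mul (B N)
    rw [mul_zero] at hlim'
    obtain ⟨n, hn, hnN⟩ :=
      ((hlim'.eventually_lt_const zero_lt_one).and (eventually_ge_atTop N)).exists
    apply hN n hnN
    change B n * κ n * l ^ n ≤ 1
    rw [hconst n hnN, mul_assoc]
    exact hn.le
  · exact (hBs n).trans (if_pos hn)
  · exact (hBs n).trans (if_neg hn)
  · induction n with
    | zero => simp [hB0]
    | succ n ih =>
      rw [hBs, pow_succ, ← mul_assoc]
      split_ifs with h
      · exact mul_le_one₀ h hl0.le hl1.le
      · exact mul_le_one₀ ih hl0.le hl1.le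

/-- The orbit of `t` under the Lüroth system renormalized to the digits `2, …, M`, where the
times in `S` are skipped. -/
noncomputable def skipOrbit (M : ℕ) (S : Set ℕ) (t : ℝ) : ℕ → ℝ
  | 0 => t
  | n + 1 => open Classical in
    if n ∈ S then skipOrbit M S t n
    else lurothT ((1 - 1 / M) * skipOrbit M S t n + 1 / M)

/-- The digit `q n` at a time `n ∈ S`, and otherwise the digit of the orbit `skipOrbit`. -/
noncomputable def skipDigit (M : ℕ) (S : Set ℕ) (q : ℕ → ℕ) (t : ℝ) (n : ℕ) : ℕ :=
  open Classical in
  if n ∈ S then q n else lurothD1 ((1 - 1 / M) * skipOrbit M S t n + 1 / M)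

/-- The derivative of the inverse branch of the skipping system at time `n` and digit `d`. -/
noncomputable def skipRatio (M : ℕ) (S : Set ℕ) (n d : ℕ) : ℝ :=
  open Classical in if n ∈ S then 1 else lurothRatio d / (1 - 1 / M)

section Skip

variable {M : ℕ} {S : Set ℕ} {q : ℕ → ℕ}

lemma renormalize_mem (hM : 2 ≤ M) {x : ℝ} (hx : x ∈ Ioc (0 : ℝ) 1) :
    1 / (M : ℝ) < (1 - 1 / M) * x + 1 / M ∧ (1 - 1 / M) * x + 1 / M ∈ Ioc (0 : ℝ) 1 := by
  have hM' : (2 : ℝ) ≤ M := by exact_mod_cast hM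
  have h0 : 0 < 1 / (M : ℝ) := by positivity
  have h1 : 1 / (M : ℝ) < 1 := by rw [div_lt_one (by linarith)]; linarith
  obtain ⟨hx0, hx1⟩ := hx
  have h := mul_pos (sub_pos.2 h1) hx0
  exact ⟨by linarith, by linarith, by nlinarith⟩

lemma skipOrbit_mem (hM : 2 ≤ M) {t : ℝ} (ht : t ∈ Ioc (0 : ℝ) 1) (n : ℕ) :
    skipOrbit M S t n ∈ Ioc (0 : ℝ) 1 := by
  induction n with
  | zero => exact ht
  | succ n ih =>
    rw [skipOrbit]
    split_ifs
    · exact ih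
    · exact lurothT_mem (renormalize_mem hM ih).2

lemma two_le_skipDigit (hM : 2 ≤ M) (hq : ∀ n, 2 ≤ q n) {t : ℝ} (ht : t ∈ Ioc (0 : ℝ) 1)
    (n : ℕ) : 2 ≤ skipDigit M S q t n := by
  unfold skipDigit
  split_ifs
  · exact hq n
  · exact (lurothD1_spec (renormalize_mem hM (skipOrbit_mem hM ht n)).2).1

lemma skipDigit_of_mem {n : ℕ} (hn : n ∈ S) (t : ℝ) : skipDigit M S q t n = q n := if_pos hn

lemma skipDigit_le (hM : 2 ≤ M) {t : ℝ} (ht : t ∈ Ioc (0 : ℝ) 1) {n : ℕ} (hn : n ∉ S) :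
    skipDigit M S q t n ≤ M := by
  unfold skipDigit
  rw [if_neg hn]
  exact lurothD1_le (by omega) (renormalize_mem hM (skipOrbit_mem hM ht n)).1

lemma skipOrbit_sub_skipOrbit (hM : 2 ≤ M) {t t' : ℝ} (ht : t ∈ Ioc (0 : ℝ) 1)
    (ht' : t' ∈ Ioc (0 : ℝ) 1) {n : ℕ} (h : skipDigit M S q t n = skipDigit M S q t' n) :
    skipOrbit M S t n - skipOrbit M S t' n =
      skipRatio M S n (skipDigit M S q t n) *
        (skipOrbit M S t (n + 1) - skipOrbit M S t' (n + 1)) := by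
  unfold skipRatio
  rw [skipOrbit, skipOrbit]
  split_ifs with hn
  · ring
  · unfold skipDigit at h ⊢
    rw [if_neg hn] at h ⊢
    rw [if_neg hn] at h
    have hM' : (2 : ℝ) ≤ M := by exact_mod_cast hM
    have hpos : (1 : ℝ) - 1 / M ≠ 0 := by
      have : 1 / (M : ℝ) < 1 := by rw [div_lt_one (by linarith)]; linarith
      linarith
    have e := eq_one_div_add_lurothRatio_mul (renormalize_mem hM (skipOrbit_mem (S := S) hM ht n)).2
    have e' :=
      eq_one_div_add_lurothRatio_mul (renormalize_mem hM (skipOrbit_mem (S := S) hM ht' n)).2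
    rw [← h] at e'
    rw [div_mul_eq_mul_div, eq_div_iff hpos]
    linear_combination e - e'

lemma dist_le_prod_skipRatio (hM : 2 ≤ M) (hq : ∀ n, 2 ≤ q n) {t t' : ℝ}
    (ht : t ∈ Ioc (0 : ℝ) 1) (ht' : t' ∈ Ioc (0 : ℝ) 1) {n : ℕ}
    (h : ∀ i < n, skipDigit M S q t i = skipDigit M S q t' i) :
    dist t t' ≤ ∏ i ∈ Finset.range n, skipRatio M S i (skipDigit M S q t i) := by
  have key := sub_eq_prod_mul_sub (u := skipOrbit M S t) (v := skipOrbit M S t')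
    (w := fun i => skipRatio M S i (skipDigit M S q t i)) (n := n)
    fun i hi => skipOrbit_sub_skipOrbit hM ht ht' (h i hi)
  have hP : 0 ≤ ∏ i ∈ Finset.range n, skipRatio M S i (skipDigit M S q t i) := by
    refine Finset.prod_nonneg fun i _ => ?_
    have hM' : (2 : ℝ) ≤ M := by exact_mod_cast hM
    have : 1 / (M : ℝ) ≤ 1 := by rw [div_le_one (by linarith)]; linarith
    unfold skipRatio
    split_ifs
    · exact zero_le_one
    · exact div_nonneg (lurothRatio_pos (two_le_skipDigit hM hq ht i)).le (by linarith)
  change t - t' = _ at key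
  rw [Real.dist_eq, key, abs_mul, abs_of_nonneg hP]
  refine mul_le_of_le_one_right hP ?_
  obtain ⟨h0, h1⟩ := skipOrbit_mem (S := S) hM ht n
  obtain ⟨h0', h1'⟩ := skipOrbit_mem (S := S) hM ht' n
  rw [abs_le]
  constructor <;> linarith

variable {B : ℕ → ℝ} {l s : ℝ}

lemma prod_skipRatio_le (hM : 2 ≤ M) (hq : ∀ n, 2 ≤ q n) (hs0 : 0 < s) (hs1 : s < 1)
    (hl : l = (1 / 2) ^ (1 - s) / (1 - 1 / M)) (hl0 : 0 < l)
    (hB0 : B 0 = 1) (hB1 : ∀ n, 1 ≤ B n)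
    (hBS : ∀ n ∈ S, B (n + 1) = B n * ((q n : ℝ) ^ 2 / l)) (hBS' : ∀ n ∉ S, B (n + 1) = B n)
    {t : ℝ} (ht : t ∈ Ioc (0 : ℝ) 1) (n : ℕ) :
    ∏ i ∈ Finset.range n, skipRatio M S i (skipDigit M S q t i) ≤
      (∏ i ∈ Finset.range n, lurothRatio (skipDigit M S q t i)) ^ s * (l ^ n * B n) := by
  have hD := two_le_skipDigit (S := S) hM hq ht
  have hM' : (2 : ℝ) ≤ M := by exact_mod_cast hM
  have hM1 : 0 < 1 - 1 / (M : ℝ) := by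
    have : 1 / (M : ℝ) < 1 := by rw [div_lt_one (by linarith)]; linarith
    linarith
  induction n with
  | zero => simp [hB0]
  | succ n ih =>
    have hr := lurothRatio_pos (hD n)
    have hr2 := lurothRatio_le_half (hD n)
    have hP := prod_lurothRatio_pos hD n
    rw [Finset.prod_range_succ, Finset.prod_range_succ, Real.mul_rpow hP.le hr.le]
    have hA : 0 ≤ (∏ i ∈ Finset.range n, lurothRatio (skipDigit M S q t i)) ^ s *
        (l ^ n * B n) := by
      have := hB1 n
      positivity
    by_cases hn : n ∈ S
    · rw [skipRatio, if_pos hn, mul_one, hBS n hn]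
      refine ih.trans ?_
      have h1 : 1 ≤ lurothRatio (skipDigit M S q t n) ^ s * (q n : ℝ) ^ 2 := by
        have hq2 : (2 : ℝ) ≤ q n := by exact_mod_cast hq n
        calc (1 : ℝ) = 1 / (q n : ℝ) ^ 2 * (q n : ℝ) ^ 2 := by field_simp
          _ ≤ lurothRatio (skipDigit M S q t n) * (q n : ℝ) ^ 2 := by
            gcongr
            rw [skipDigit_of_mem hn]
            exact one_div_sq_le_lurothRatio (hq n)
          _ ≤ _ := by
            gcongr
            exact Real.self_le_rpow_of_le_one hr.le (by linarith) hs1.le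
      calc _ ≤ _ := le_mul_of_one_le_right hA h1
        _ = _ := by
          field_simp
          ring
    · rw [skipRatio, if_neg hn, hBS' n hn]
      have h1 : lurothRatio (skipDigit M S q t n) / (1 - 1 / M) ≤
          lurothRatio (skipDigit M S q t n) ^ s * l := by
        rw [hl, mul_div_assoc']
        gcongr
        calc lurothRatio (skipDigit M S q t n)
            = lurothRatio (skipDigit M S q t n) ^ s *
              lurothRatio (skipDigit M S q t n) ^ (1 - s) := by
              rw [← Real.rpow_add hr, add_sub_cancel, Real.rpow_one]
          _ ≤ _ := by
            gcongr
      calc _ ≤ _ := mul_le_mul ih h1 (by positivity) hA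
        _ = _ := by ring

lemma dist_le_mul_dist_lurothSeries (hM : 2 ≤ M) (hq : ∀ n, 2 ≤ q n) (hs0 : 0 < s)
    (hs1 : s < 1) (hl : l = (1 / 2) ^ (1 - s) / (1 - 1 / M)) (hl0 : 0 < l) (hl1 : l < 1)
    (hB0 : B 0 = 1) (hB1 : ∀ n, 1 ≤ B n)
    (hBS : ∀ n ∈ S, B (n + 1) = B n * ((q n : ℝ) ^ 2 / l)) (hBS' : ∀ n ∉ S, B (n + 1) = B n)
    (hBl : ∀ n, B n * l ^ n ≤ 1) {t t' : ℝ} (ht : t ∈ Ioc (0 : ℝ) 1)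
    (ht' : t' ∈ Ioc (0 : ℝ) 1) :
    dist t t' ≤ M ^ 3 / l ^ 2 *
      dist (lurothSeries (skipDigit M S q t)) (lurothSeries (skipDigit M S q t')) ^ s := by
  classical
  have hD := two_le_skipDigit (S := S) hM hq ht
  have hD' := two_le_skipDigit (S := S) hM hq ht'
  have hM' : (2 : ℝ) ≤ M := by exact_mod_cast hM
  have hprod := prod_skipRatio_le hM hq hs0 hs1 hl hl0 hB0 hB1 hBS hBS' ht
  by_cases hne : ∃ n, skipDigit M S q t n ≠ skipDigit M S q t' n
  swap
  · push Not at hne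
    suffices h : dist t t' ≤ 0 from h.trans (by positivity)
    have hlim : Tendsto (fun n : ℕ => ((1 / 2 : ℝ) ^ s) ^ n) atTop (𝓝 0) :=
      tendsto_pow_atTop_nhds_zero_of_lt_one (by positivity)
        (Real.rpow_lt_one (by norm_num) (by norm_num) hs0)
    refine ge_of_tendsto' hlim fun n => ?_
    refine (dist_le_prod_skipRatio hM hq ht ht' (n := n) fun i _ => hne i).trans
      ((hprod n).trans ?_)
    have hP := prod_lurothRatio_pos hD n
    have hP2 : ∏ i ∈ Finset.range n, lurothRatio (skipDigit M S q t i) ≤ (1 / 2) ^ n := by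
      simpa using Finset.prod_le_prod (s := Finset.range n)
        (fun i _ => (lurothRatio_pos (hD i)).le) fun i _ => lurothRatio_le_half (hD i)
    calc _ ≤ (∏ i ∈ Finset.range n, lurothRatio (skipDigit M S q t i)) ^ s :=
          mul_le_of_le_one_right (by positivity) (by rw [mul_comm]; exact hBl n)
      _ ≤ ((1 / 2) ^ n) ^ s := by gcongr
      _ = _ := by
        rw [← Real.rpow_natCast, ← Real.rpow_natCast, ← Real.rpow_mul (by norm_num),
          ← Real.rpow_mul (by norm_num), mul_comm]
  set n := Nat.find hne
  have hn : skipDigit M S q t n ≠ skipDigit M S q t' n := Nat.find_spec hne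
  have hlt : ∀ i < n, skipDigit M S q t i = skipDigit M S q t' i := fun i hi =>
    not_not.1 (Nat.find_min hne hi)
  have hnS : n ∉ S := fun h => hn (by rw [skipDigit_of_mem h, skipDigit_of_mem h])
  obtain ⟨Q, hQ1, hQ, hQ', hBQ⟩ : ∃ Q : ℝ, 1 ≤ Q ∧ skipDigit M S q t (n + 1) ≤ Q ∧
      skipDigit M S q t' (n + 1) ≤ Q ∧ l ^ n * B n * Q ≤ M / l ^ 2 := by
    have hBn := hB1 n
    by_cases h : n + 1 ∈ S
    · have hq2 : (2 : ℝ) ≤ q (n + 1) := by exact_mod_cast hq (n + 1)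
      refine ⟨q (n + 1), by linarith, ?_, ?_, ?_⟩
      · rw [skipDigit_of_mem h]
      · rw [skipDigit_of_mem h]
      · have h2 := hBl (n + 1 + 1)
        rw [hBS _ h, hBS' _ hnS] at h2
        rw [le_div_iff₀ (by positivity)]
        have hκ : (q (n + 1) : ℝ) ≤ (q (n + 1) : ℝ) ^ 2 / l := by
          rw [le_div_iff₀ hl0]
          nlinarith
        calc l ^ n * B n * q (n + 1) * l ^ 2
            = B n * q (n + 1) * l ^ (n + 1 + 1) := by ring
          _ ≤ B n * ((q (n + 1) : ℝ) ^ 2 / l) * l ^ (n + 1 + 1) := by gcongr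
          _ ≤ M := by linarith
    · refine ⟨M, by linarith, ?_, ?_, ?_⟩
      · exact_mod_cast skipDigit_le hM ht h
      · exact_mod_cast skipDigit_le hM ht' h
      · have h2 := hBl n
        rw [le_div_iff₀ (by positivity)]
        have hl2 : l ^ 2 ≤ 1 := pow_le_one₀ hl0.le hl1.le
        calc l ^ n * B n * (M : ℝ) * l ^ 2 = (B n * l ^ n) * M * l ^ 2 := by ring
          _ ≤ 1 * (M : ℝ) * 1 := by gcongr
          _ = M := by ring
  have hsep := lurothSeries_dist_ge hD hD' hlt hn (M := M) (Q := Q)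
    (by exact_mod_cast skipDigit_le hM ht hnS) (by exact_mod_cast skipDigit_le hM ht' hnS) hQ hQ'
  have hP := prod_lurothRatio_pos hD n
  set P := ∏ i ∈ Finset.range n, lurothRatio (skipDigit M S q t i)
  have hQ0 : 0 < Q := by linarith
  have hMQ : 1 / ((M : ℝ) ^ 2 * Q) ≤ 1 := by
    rw [div_le_one (by positivity)]
    nlinarith
  calc dist t t' ≤ P ^ s * (l ^ n * B n) :=
        (dist_le_prod_skipRatio hM hq ht ht' hlt).trans (hprod n)
    _ ≤ P ^ s * (M / l ^ 2 / Q) := by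
        gcongr
        rwa [le_div_iff₀ hQ0]
    _ = M ^ 3 / l ^ 2 * (P ^ s * (1 / ((M : ℝ) ^ 2 * Q))) := by field_simp
    _ ≤ M ^ 3 / l ^ 2 * (P ^ s * (1 / ((M : ℝ) ^ 2 * Q)) ^ s) := by
        gcongr
        exact Real.self_le_rpow_of_le_one (by positivity) hMQ hs1.le
    _ = M ^ 3 / l ^ 2 * (P * (1 / ((M : ℝ) ^ 2 * Q))) ^ s := by
        rw [Real.mul_rpow hP.le (by positivity)]
    _ ≤ _ := by gcongr

end Skip

lemma exists_renormalized_ratio_lt_one {s : ℝ} (hs : s < 1) :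
    ∃ M : ℕ, 2 ≤ M ∧ (1 / 2 : ℝ) ^ (1 - s) / (1 - 1 / M) < 1 := by
  have h1 : (1 / 2 : ℝ) ^ (1 - s) < 1 :=
    Real.rpow_lt_one (by norm_num) (by norm_num) (by linarith)
  have hlim : Tendsto (fun M : ℕ => 1 - 1 / (M : ℝ)) atTop (𝓝 1) := by
    simpa using tendsto_one_div_atTop_nhds_zero_nat.const_sub (1 : ℝ)
  obtain ⟨M, hM, hM2⟩ := ((hlim.eventually_const_lt h1).and (eventually_ge_atTop 2)).exists
  refine ⟨M, hM2, ?_⟩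
  rwa [div_lt_one (lt_trans (by positivity) hM)]

lemma floor_exp_add_two_le {y : ℝ} (hy : 0 ≤ y) : (⌊exp y⌋₊ : ℝ) + 2 ≤ 3 * exp y := by
  have h1 := Nat.floor_le (Real.exp_pos y).le
  have h2 := Real.one_le_exp hy
  linarith

lemma tendsto_exp_mul_pow_of_slow {ψ : ℕ → ℝ}
    (hslow : Tendsto (fun n : ℕ => ψ n / n) atTop (𝓝 0)) {l : ℝ} (hl0 : 0 < l) (hl1 : l < 1) :
    Tendsto (fun n : ℕ => exp (ψ n) ^ 2 * l ^ n) atTop (𝓝 0) := by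
  have hlog : Real.log l < 0 := Real.log_neg hl0 hl1
  have h1 : Tendsto (fun n : ℕ => 2 * (ψ n / n) + Real.log l) atTop (𝓝 (Real.log l)) := by
    simpa using (hslow.const_mul 2).add_const (Real.log l)
  have h2 := Real.tendsto_exp_atBot.comp
    ((tendsto_natCast_atTop_atTop (R := ℝ)).atTop_mul_neg hlog h1)
  refine h2.congr' ?_
  filter_upwards [eventually_gt_atTop 0] with n hn
  have hn' : (n : ℝ) ≠ 0 := by positivity
  rw [Function.comp_apply, mul_add, Real.exp_add, ← Real.exp_nat_mul, Real.exp_nat_mul (Real.log l),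
    Real.exp_log hl0]
  congr 2
  push_cast
  field_simp

lemma limsup_log_lurothDigit {ψ : ℕ → ℝ} (hpos : ∀ n : ℕ, 1 ≤ n → 0 < ψ n)
    (hψ : Tendsto ψ atTop atTop) {D : ℕ → ℕ} (hD : ∀ n, 2 ≤ D n) {M : ℕ} (hM : 2 ≤ M)
    {S : Set ℕ} (hS : ∃ᶠ n in atTop, n ∈ S)
    (hDS : ∀ n ∈ S, D n = ⌊exp (ψ (n + 1))⌋₊ + 2) (hDS' : ∀ n ∉ S, D n ≤ M) :
    limsup (fun n : ℕ => Real.log (lurothDigit n (lurothSeries D)) / ψ n) atTop = 1 := by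
  have hM' : (2 : ℝ) ≤ M := by exact_mod_cast hM
  rw [← limsup_nat_add _ 1]
  simp only [lurothDigit_lurothSeries hD]
  have hψ' : Tendsto (fun n => ψ (n + 1)) atTop atTop := hψ.comp (tendsto_add_atTop_nat 1)
  have hpos' : ∀ n, 0 < ψ (n + 1) := fun n => hpos _ (by omega)
  have hlim : Tendsto (fun n => 1 + Real.log (3 * M) / ψ (n + 1)) atTop (𝓝 1) := by
    simpa using (hψ'.const_div_atTop (Real.log (3 * M))).const_add 1
  have hup : ∀ n, Real.log (D n) / ψ (n + 1) ≤ 1 + Real.log (3 * M) / ψ (n + 1) := by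
    intro n
    have hp := hpos' n
    have hDn : (D n : ℝ) ≤ exp (ψ (n + 1)) * (3 * M) := by
      have he := Real.one_le_exp hp.le
      by_cases hn : n ∈ S
      · rw [hDS n hn]
        push_cast
        refine (floor_exp_add_two_le hp.le).trans ?_
        nlinarith
      · have : (D n : ℝ) ≤ M := by exact_mod_cast hDS' n hn
        nlinarith
    have h2 : (2 : ℝ) ≤ D n := by exact_mod_cast hD n
    have := Real.log_le_log (by linarith) hDn
    rw [Real.log_mul (Real.exp_pos _).ne' (by positivity), Real.log_exp] at this
    calc Real.log (D n) / ψ (n + 1) ≤ (ψ (n + 1) + Real.log (3 * M)) / ψ (n + 1) := by gcongr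
      _ = _ := by rw [add_div, div_self hp.ne']
  have hlow : ∀ n, 0 ≤ Real.log (D n) / ψ (n + 1) := fun n =>
    div_nonneg (Real.log_natCast_nonneg _) (hpos' n).le
  have hbdd : IsBoundedUnder (· ≤ ·) atTop fun n => Real.log (D n) / ψ (n + 1) :=
    hlim.isBoundedUnder_le.mono_le (Eventually.of_forall hup)
  apply le_antisymm
  · rw [← hlim.limsup_eq]
    exact limsup_le_limsup (Eventually.of_forall hup)
      (isBoundedUnder_of ⟨0, hlow⟩ : IsBoundedUnder (· ≥ ·) atTop _).isCoboundedUnder_le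
      hlim.isBoundedUnder_le
  · refine le_limsup_of_frequently_le (hS.mono fun n hn => ?_) hbdd
    rw [one_le_div (hpos' n), Real.le_log_iff_exp_le (by have := hD n; positivity), hDS n hn]
    push_cast
    linarith [Nat.lt_floor_add_one (exp (ψ (n + 1)))]

lemma le_dimH_luroth_Esup {ψ : ℕ → ℝ} (hpos : ∀ n : ℕ, 1 ≤ n → 0 < ψ n)
    (hψ : Tendsto ψ atTop atTop) (hslow : Tendsto (fun n : ℕ => ψ n / n) atTop (𝓝 0))
    {s : ℝ≥0} (hs0 : 0 < s) (hs1 : s < 1) :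
    (s : ℝ≥0∞) ≤ dimH {x : ℝ | x ∈ Set.Ioc (0 : ℝ) 1 ∧
      limsup (fun n : ℕ => Real.log (lurothDigit n x) / ψ n) atTop = 1} := by
  have hs1' : (s : ℝ) < 1 := by exact_mod_cast hs1
  obtain ⟨M, hM, hl1⟩ := exists_renormalized_ratio_lt_one hs1'
  have hM' : (2 : ℝ) ≤ M := by exact_mod_cast hM
  obtain ⟨l, hl⟩ : ∃ l : ℝ, l = (1 / 2 : ℝ) ^ (1 - (s : ℝ)) / (1 - 1 / M) := ⟨_, rfl⟩
  rw [← hl] at hl1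
  have hl0 : 0 < l := by
    have : 1 / (M : ℝ) < 1 := by rw [div_lt_one (by linarith)]; linarith
    rw [hl]
    exact div_pos (by positivity) (by linarith)
  let q : ℕ → ℕ := fun n => ⌊exp (ψ (n + 1))⌋₊ + 2
  have hq : ∀ n, 2 ≤ q n := fun n => Nat.le_add_left _ _
  have hκ : ∀ n, 1 ≤ (q n : ℝ) ^ 2 / l := by
    intro n
    have : (2 : ℝ) ≤ q n := by exact_mod_cast hq n
    rw [one_le_div hl0]
    nlinarith
  have hlim : Tendsto (fun n => (q n : ℝ) ^ 2 / l * l ^ n) atTop (𝓝 0) := by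
    have h := ((tendsto_exp_mul_pow_of_slow hslow hl0 hl1).comp
      (tendsto_add_atTop_nat 1)).const_mul (9 / l ^ 2)
    rw [mul_zero] at h
    refine squeeze_zero (fun n => by positivity) (fun n => ?_) h
    have hqn : (q n : ℝ) ≤ 3 * exp (ψ (n + 1)) := by
      simpa [q] using floor_exp_add_two_le (hpos (n + 1) (by omega)).le
    calc (q n : ℝ) ^ 2 / l * l ^ n ≤ (3 * exp (ψ (n + 1))) ^ 2 / l * l ^ n := by gcongr
      _ = 9 / l ^ 2 * (exp (ψ (n + 1)) ^ 2 * l ^ (n + 1)) := by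
        field_simp
        ring
  obtain ⟨S, B, hS, hB0, hB1, hBS, hBS', hBl⟩ := exists_greedy_selection hl0 hl1 hκ hlim
  have hdim := dimH_le_dimH_image_div (f := fun t => lurothSeries (skipDigit M S q t))
    (A := Ioc (0 : ℝ) 1) (C := Real.toNNReal (M ^ 3 / l ^ 2)) hs0 fun t ht t' ht' => by
      rw [Real.coe_toNNReal _ (by positivity)]
      exact dist_le_mul_dist_lurothSeries hM hq (by exact_mod_cast hs0) hs1' hl hl0 hl1 hB0 hB1
        hBS hBS' hBl ht ht'
  rw [Real.dimH_of_nonempty_interior (by simp), Module.finrank_self, Nat.cast_one,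
    ENNReal.le_div_iff_mul_le (by simp [hs0.ne']) (by simp), one_mul] at hdim
  refine hdim.trans (dimH_mono ?_)
  rintro _ ⟨t, ht, rfl⟩
  have hD := two_le_skipDigit (S := S) hM hq ht
  exact ⟨lurothSeries_mem hD, limsup_log_lurothDigit hpos hψ hD hM hS
    (fun n hn => skipDigit_of_mem hn t) fun n hn => skipDigit_le hM ht hn⟩

theorem dimH_luroth_Esup_psi_slow (ψ : ℕ → ℝ) (hpos : ∀ n : ℕ, 1 ≤ n → 0 < ψ n)
    (hψ : Tendsto ψ atTop atTop)
    (hslow : Tendsto (fun n : ℕ => ψ n / n) atTop (𝓝 0)) :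
    dimH {x : ℝ | x ∈ Set.Ioc (0 : ℝ) 1 ∧
        Filter.limsup (fun n : ℕ => Real.log (lurothDigit n x) / ψ n) atTop = 1}
      = 1 := by
  refine le_antisymm ((dimH_mono (subset_univ _)).trans Real.dimH_univ.le) ?_
  refine ENNReal.le_of_forall_nnreal_lt fun s hs => ?_
  rcases eq_zero_or_pos s with rfl | h0
  · simp
  · exact le_dimH_luroth_Esup hpos hψ hslow h0 (by exact_mod_cast hs)
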